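/- A nonnegative integer n is expressible as a sum of three squares of integers if and only if n is not of the form 4^k(8s+7) for some nonnegative integers k and s. -/

import Mathlib

/-- A positive definite integral ternary form of determinant one only takes values that are
sums of three squares. -/
theorem ternary_aux : ∀ (N M : ℕ) (a b c d e f : ℤ), a.toNat = N → (a * b - f ^ 2).toNat = M →
    0 < a → 0 < a * b - f ^ 2 →
    a * b * c + 2 * d * e * f - a * d ^ 2 - b * e ^ 2 - c * f ^ 2 = 1 →
    ∀ x y z : ℤ, ∃ u v w : ℤ,
      a * x ^ 2 + b * y ^ 2 + c * z ^ 2 + 2 * d * y * z + 2 * e * x * z + 2 * f * x * y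
        = u ^ 2 + v ^ 2 + w ^ 2 := by
  intro N
  induction N using Nat.strong_induction_on with
  | _ N ihN =>
  intro M
  induction M using Nat.strong_induction_on with
  | _ M ihM =>
  -- fully reduced case
  have key : ∀ (a b c d e f : ℤ), a.toNat = N → (a * b - f ^ 2).toNat = M →
      0 < a → 0 < a * b - f ^ 2 →
      a * b * c + 2 * d * e * f - a * d ^ 2 - b * e ^ 2 - c * f ^ 2 = 1 →
      2 * |a * d - e * f| ≤ a * b - f ^ 2 → 2 * |e| ≤ a → 2 * |f| ≤ a →
      ∀ x y z : ℤ, ∃ u v w : ℤ,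
        a * x ^ 2 + b * y ^ 2 + c * z ^ 2 + 2 * d * y * z + 2 * e * x * z + 2 * f * x * y
          = u ^ 2 + v ^ 2 + w ^ 2 := by
    intro a b c d e f hN hM ha hB hdet hD he hf x y z
    have hBC : (a * b - f ^ 2) * (a * c - e ^ 2) - (a * d - e * f) ^ 2 = a := by
      linear_combination a * hdet
    have hCpos : 0 < a * c - e ^ 2 := by
      by_contra h
      have : (a * b - f ^ 2) * (a * c - e ^ 2) ≤ 0 :=
        mul_nonpos_of_nonneg_of_nonpos hB.le (not_lt.mp h)
      nlinarith [sq_nonneg (a * d - e * f)]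
    by_cases hCB : a * c - e ^ 2 < a * b - f ^ 2
    · obtain ⟨u, v, w, h⟩ := ihM (a * c - e ^ 2).toNat (by omega) a c b d f e hN rfl ha hCpos
        (by linear_combination hdet) x z y
      exact ⟨u, v, w, by rw [← h]; ring⟩
    push Not at hCB
    have hbpos : 0 < b := by
      by_contra h
      have : a * b ≤ 0 := mul_nonpos_of_nonneg_of_nonpos ha.le (not_lt.mp h)
      nlinarith [sq_nonneg f]
    by_cases hba : b < a
    · obtain ⟨u, v, w, h⟩ := ihN b.toNat (by omega) _ b a c e d f rfl rfl hbpos (by linarith)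
        (by linear_combination hdet) y x z
      exact ⟨u, v, w, by rw [← h]; ring⟩
    push Not at hba
    have hD2 : 4 * (a * d - e * f) ^ 2 ≤ (a * b - f ^ 2) ^ 2 := by
      have := abs_nonneg (a * d - e * f)
      have h2 := sq_abs (a * d - e * f)
      nlinarith
    have hf2 : 4 * f ^ 2 ≤ a ^ 2 := by
      have := abs_nonneg f
      have h2 := sq_abs f
      nlinarith
    have hB1 : 3 * (a * b - f ^ 2) ^ 2 ≤ 4 * a := by nlinarith
    have hB2 : 3 * a ^ 2 ≤ 4 * (a * b - f ^ 2) := by nlinarith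
    have ha1 : a = 1 := by
      by_contra hne
      have h2 : 2 ≤ a := by omega
      have h3 : (3 * a ^ 2) ^ 2 ≤ (4 * (a * b - f ^ 2)) ^ 2 := by gcongr
      have h4 : 8 * a ≤ a ^ 4 := by
        have : (2:ℤ) ^ 3 ≤ a ^ 3 := by gcongr
        nlinarith
      nlinarith
    subst ha1
    have hf0 : f = 0 := abs_eq_zero.mp (by have := abs_nonneg f; omega)
    have he0 : e = 0 := abs_eq_zero.mp (by have := abs_nonneg e; omega)
    subst hf0 he0
    have hb1 : b = 1 := by nlinarith
    subst hb1
    have hd0 : d = 0 := abs_eq_zero.mp (by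
      have := abs_nonneg d
      norm_num at hD
      omega)
    subst hd0
    have hc : c = 1 := by linarith
    subst hc
    exact ⟨x, y, z, by ring⟩
  have near : ∀ s t : ℤ, 0 < s → ∃ k : ℤ, 2 * |t + k * s| ≤ s := by
    intro s t hs
    refine ⟨-((2 * t + s) / (2 * s)), ?_⟩
    have h1 := Int.emod_add_mul_ediv (2 * t + s) (2 * s)
    have h2 := Int.emod_nonneg (2 * t + s) (show 2 * s ≠ 0 by omega)
    have h3 := Int.emod_lt_of_pos (2 * t + s) (show 0 < 2 * s by omega)
    have : |t + -((2 * t + s) / (2 * s)) * s| * 2 = |2 * (t + -((2 * t + s) / (2 * s)) * s)| := by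
      rw [abs_mul]; norm_num; ring
    rw [mul_comm, this, abs_le]
    constructor <;> nlinarith
  intro a b c d e f hN hM ha hB hdet x y z
  obtain ⟨k, hk⟩ := near (a * b - f ^ 2) (a * d - e * f) hB
  obtain ⟨l, hl⟩ := near a f ha
  obtain ⟨m, hm⟩ := near a (e + k * f) ha
  -- substitution y = y' + k z, then x = x' + l y' + m z
  have hBe : a * (a * l ^ 2 + b + 2 * f * l) - (f + l * a) ^ 2 = a * b - f ^ 2 := by ring
  obtain ⟨u, v, w, h⟩ := key a (a * l ^ 2 + b + 2 * f * l)
    (a * m ^ 2 + b * k ^ 2 + c + 2 * d * k + 2 * e * m + 2 * f * m * k)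
    (a * l * m + b * k + d + e * l + f * (l * k + m)) (e + k * f + m * a) (f + l * a)
    hN (by rw [hBe]; exact hM) ha (by rw [hBe]; exact hB)
    (by linear_combination hdet)
    (by
      rw [hBe]
      convert hk using 3
      ring) hm hl (x - l * (y - k * z) - m * z) (y - k * z) z
  exact ⟨u, v, w, by rw [← h]; ring⟩

theorem of_residue (n b q t : ℤ) (hb : 0 < b) (hq : q = b * n - 1) (hq0 : 0 < q)
    (h : q ∣ t ^ 2 + b) : ∃ u v w : ℤ, n = u ^ 2 + v ^ 2 + w ^ 2 := by
  obtain ⟨a, ha⟩ := h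
  have hapos : 0 < a := by
    by_contra h
    have : q * a ≤ 0 := mul_nonpos_of_nonneg_of_nonpos hq0.le (not_lt.mp h)
    nlinarith [sq_nonneg t]
  have hB : a * q - t ^ 2 = b := by linarith
  obtain ⟨u, v, w, h⟩ := ternary_aux _ _ a q n 0 1 t rfl rfl hapos (by rw [hB]; exact hb)
    (by linear_combination n * hB - hq) 0 0 1
  exact ⟨u, v, w, by linarith⟩

theorem sq_of_jacobi (p : ℕ) (hp : p.Prime) (b : ℤ) (h : jacobiSym (-b) p = 1) :
    ∃ t : ℤ, (p : ℤ) ∣ t ^ 2 + b := by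
  have := Fact.mk hp
  rw [← jacobiSym.legendreSym.to_jacobiSym] at h
  have h0 : ((-b : ℤ) : ZMod p) ≠ 0 := by
    intro h0
    rw [(legendreSym.eq_zero_iff p (-b)).mpr h0] at h
    exact absurd h (by norm_num)
  obtain ⟨r, hr⟩ := (legendreSym.eq_one_iff p h0).mp h
  obtain ⟨t, rfl⟩ := ZMod.intCast_surjective r
  refine ⟨t, (ZMod.intCast_zmod_eq_zero_iff_dvd _ p).mp ?_⟩
  push_cast at hr ⊢
  rw [sq, ← hr]
  ring

theorem case_even (n : ℕ) (hn : n % 4 = 2) : ∃ u v w : ℤ, (n : ℤ) = u ^ 2 + v ^ 2 + w ^ 2 := by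
  have hcop : Nat.Coprime (n - 1) (4 * n) := by
    apply Nat.Coprime.mul_right
    · have : Nat.Coprime (n - 1) (2 ^ 2) :=
        Nat.Coprime.pow_right 2 (Nat.coprime_two_right.mpr (Nat.odd_iff.mpr (by omega)))
      simpa using this
    · rw [Nat.coprime_self_sub_left (by omega)]
      simp
  have : NeZero (4 * n) := ⟨by omega⟩
  obtain ⟨p, hgt, hp, hmod⟩ := Nat.forall_exists_prime_gt_and_modEq (n - 1) (by omega) hcop
  obtain ⟨v, hv⟩ := (Nat.modEq_iff_dvd' hgt.le).mp hmod.symm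
  have hpv : p + 1 = (4 * v + 1) * n := by
    have : p = 4 * n * v + (n - 1) := by omega
    rw [this, add_assoc, Nat.sub_add_cancel (by omega)]
    ring
  have hpv' : (p : ℤ) = (4 * v + 1 : ℕ) * n - 1 := by
    have : ((p + 1 : ℕ) : ℤ) = ((4 * v + 1) * n : ℕ) := by rw [hpv]
    push_cast at this ⊢
    linarith
  have hp4 : p % 4 = 1 := by
    have : p = 4 * (n * v) + (n - 1) := by rw [← mul_assoc]; omega
    omega
  have hj : jacobiSym (-((4 * v + 1 : ℕ) : ℤ)) p = 1 := by
    have hpo : Odd p := Nat.odd_iff.mpr (by omega)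
    have hbo : Odd (4 * v + 1) := Nat.odd_iff.mpr (by omega)
    rw [jacobiSym.neg _ hpo, ZMod.χ₄_nat_one_mod_four hp4, one_mul,
      jacobiSym.quadratic_reciprocity_one_mod_four (by omega) hpo]
    have : jacobiSym (p : ℤ) (4 * v + 1) = jacobiSym (-1) (4 * v + 1) := by
      apply jacobiSym.mod_left'
      have h1 : (p : ℤ) = -1 + ((4 * v + 1 : ℕ) : ℤ) * n := by linarith
      rw [h1, Int.add_mul_emod_self_left]
    rw [this, jacobiSym.at_neg_one hbo, ZMod.χ₄_nat_one_mod_four (by omega)]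
  obtain ⟨t, ht⟩ := sq_of_jacobi p hp _ hj
  exact of_residue n _ p t (by positivity) hpv' (by exact_mod_cast hp.pos) ht

theorem case_odd (n c q : ℕ) (hq : 2 * q + 1 = c * n) (hqo : Odd q) (hn : Odd n)
    (hc : c = 3 ∨ (c = 1 ∧ q % 4 = 1)) :
    ∃ u v w : ℤ, (n : ℤ) = u ^ 2 + v ^ 2 + w ^ 2 := by
  have hn0 : 0 < n := hn.pos
  have hcop : Nat.Coprime q (4 * n) := by
    apply Nat.Coprime.mul_right
    · have : Nat.Coprime q (2 ^ 2) :=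
        Nat.Coprime.pow_right 2 (Nat.coprime_two_right.mpr hqo)
      simpa using this
    · rw [← Nat.isCoprime_iff_coprime]
      refine ⟨-2, c, ?_⟩
      have : ((2 * q + 1 : ℕ) : ℤ) = (c * n : ℕ) := by rw [hq]
      push_cast at this
      linarith
  have : NeZero (4 * n) := ⟨by omega⟩
  obtain ⟨p, hgt, hp, hmod⟩ := Nat.forall_exists_prime_gt_and_modEq q (by omega) hcop
  obtain ⟨v, hv⟩ := (Nat.modEq_iff_dvd' hgt.le).mp hmod.symm
  have hpq : p = 4 * (n * v) + q := by rw [← mul_assoc]; omega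
  obtain ⟨b, hb⟩ : ∃ b, b = 8 * v + c := ⟨_, rfl⟩
  have hpv' : (2 * p : ℤ) = (b : ℤ) * n - 1 := by
    have : ((2 * q + 1 : ℕ) : ℤ) = (c * n : ℕ) := by rw [hq]
    rw [hpq, hb]
    push_cast at this ⊢
    linarith
  have hqo' := Nat.odd_iff.mp hqo
  have hpo : Odd p := Nat.odd_iff.mpr (by omega)
  have hbo : Odd b := Nat.odd_iff.mpr (by omega)
  have hpb : jacobiSym (p : ℤ) b = 1 := by
    have h1 : jacobiSym (-2 * p : ℤ) b = jacobiSym 1 b := by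
      apply jacobiSym.mod_left'
      have : (-2 * p : ℤ) = 1 + b * (-n) := by linarith
      rw [this, Int.add_mul_emod_self_left]
    have h2 : jacobiSym (-2) b = 1 := by
      rw [jacobiSym.at_neg_two hbo, ZMod.χ₈'_nat_eq_if_mod_eight]
      have : b % 8 = 3 ∨ b % 8 = 1 := by omega
      rcases this with h | h <;> simp [h] <;> omega
    rw [jacobiSym.mul_left, h2, one_mul, jacobiSym.one_left] at h1
    exact h1
  have hj : jacobiSym (-(b : ℤ)) p = 1 := by
    rw [jacobiSym.neg _ hpo]
    have hp4 : p % 4 = 1 ∨ (p % 4 = 3 ∧ b % 4 = 3) := by omega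
    rcases hp4 with h | ⟨h, h'⟩
    · rw [ZMod.χ₄_nat_one_mod_four h, one_mul, ← jacobiSym.quadratic_reciprocity_one_mod_four h hbo,
        hpb]
    · rw [ZMod.χ₄_nat_three_mod_four h, jacobiSym.quadratic_reciprocity_three_mod_four h' h, hpb]
      norm_num
  obtain ⟨t, ht⟩ := sq_of_jacobi p hp _ hj
  have hbi : (b : ℤ) % 2 = 1 := by have := Nat.odd_iff.mp hbo; omega
  have hpi : (p : ℤ) % 2 = 1 := by have := Nat.odd_iff.mp hpo; omega
  have hcop2 : IsCoprime (2 : ℤ) p := by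
    rw [show (2 : ℤ) = (2 : ℕ) by rfl, Nat.isCoprime_iff_coprime]
    exact Nat.coprime_two_left.mpr hpo
  -- pick t odd
  obtain ⟨t', ht', hodd⟩ : ∃ t' : ℤ, (p : ℤ) ∣ t' ^ 2 + b ∧ t' % 2 = 1 := by
    rcases Int.emod_two_eq_zero_or_one t with h | h
    · refine ⟨t + p, ?_, by omega⟩
      have : (t + p : ℤ) ^ 2 + b = (t ^ 2 + b) + p * (2 * t + p) := by ring
      rw [this]
      exact dvd_add ht (dvd_mul_right _ _)
    · exact ⟨t, ht, h⟩
  refine of_residue n b (2 * p) t' (by exact_mod_cast hbo.pos) hpv'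
    (by have := hp.pos; positivity) (hcop2.mul_dvd ?_ ht')
  have hto : Odd t' := Int.odd_iff.mpr hodd
  exact ((hto.pow).add_odd (Int.odd_iff.mpr hbi)).two_dvd

theorem not_three_squares (k : ℕ) : ∀ (s a b c : ℤ),
    4 ^ k * (8 * s + 7) ≠ a ^ 2 + b ^ 2 + c ^ 2 := by
  induction k with
  | zero =>
    intro s a b c h
    have h8 : ∀ x : ℤ, x ^ 2 % 8 = 0 ∨ x ^ 2 % 8 = 1 ∨ x ^ 2 % 8 = 4 := by
      intro x
      have : x % 8 = 0 ∨ x % 8 = 1 ∨ x % 8 = 2 ∨ x % 8 = 3 ∨ x % 8 = 4 ∨ x % 8 = 5 ∨ x % 8 = 6 ∨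
        x % 8 = 7 := by omega
      rcases this with h | h | h | h | h | h | h | h <;> simp [pow_two, Int.mul_emod, h]
    have := h8 a
    have := h8 b
    have := h8 c
    omega
  | succ k ih =>
    intro s a b c h
    have h4 : ∀ x : ℤ, (x ^ 2 % 4 = 0 ∧ x % 2 = 0) ∨ x ^ 2 % 4 = 1 := by
      intro x
      have : x % 4 = 0 ∨ x % 4 = 1 ∨ x % 4 = 2 ∨ x % 4 = 3 := by omega
      rcases this with h | h | h | h <;> simp [pow_two, Int.mul_emod, h] <;> omega
    have ha := h4 a
    have hb := h4 b
    have hc := h4 c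
    rw [pow_succ, mul_comm (4 ^ k) 4, mul_assoc] at h
    obtain ⟨a', rfl⟩ : (2 : ℤ) ∣ a := by omega
    obtain ⟨b', rfl⟩ : (2 : ℤ) ∣ b := by omega
    obtain ⟨c', rfl⟩ : (2 : ℤ) ∣ c := by omega
    exact ih s a' b' c' (by linarith)

theorem three_squares_of_not (n : ℕ) : (¬ ∃ k s : ℕ, n = 4 ^ k * (8 * s + 7)) →
    ∃ a b c : ℤ, (n : ℤ) = a ^ 2 + b ^ 2 + c ^ 2 := by
  induction n using Nat.strong_induction_on with
  | _ n ih =>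
  intro h
  rcases Nat.eq_zero_or_pos n with rfl | hpos
  · exact ⟨0, 0, 0, by simp⟩
  have h7 : n % 8 ≠ 7 := fun h7 => h ⟨0, n / 8, by omega⟩
  by_cases h4 : n % 4 = 0
  · obtain ⟨m, rfl⟩ := Nat.dvd_of_mod_eq_zero h4
    obtain ⟨a, b, c, habc⟩ := ih m (by omega) (by
      rintro ⟨k, s, rfl⟩
      exact h ⟨k + 1, s, by ring⟩)
    exact ⟨2 * a, 2 * b, 2 * c, by push_cast; rw [habc]; ring⟩
  by_cases h2 : n % 4 = 2
  · exact case_even n h2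
  have hodd : Odd n := Nat.odd_iff.mpr (by omega)
  by_cases h3 : n % 8 = 3
  · exact case_odd n 1 ((n - 1) / 2) (by omega) (Nat.odd_iff.mpr (by omega)) hodd
      (Or.inr ⟨rfl, by omega⟩)
  · exact case_odd n 3 ((3 * n - 1) / 2) (by omega) (Nat.odd_iff.mpr (by omega)) hodd (Or.inl rfl)

/-- Legendre's three-square theorem: a nonnegative integer `n` is a sum of three
squares of integers iff it is not of the form `4^k * (8*s + 7)`. -/
theorem three_squares (n : ℕ) :
    (∃ a b c : ℤ, (n : ℤ) = a ^ 2 + b ^ 2 + c ^ 2) ↔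
      ¬ ∃ k s : ℕ, n = 4 ^ k * (8 * s + 7) := by
  refine ⟨?_, three_squares_of_not n⟩
  rintro ⟨a, b, c, h⟩ ⟨k, s, rfl⟩
  exact not_three_squares k s a b c (by rw [← h]; push_cast; ring)
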